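/- For every instance (G,w) of the concurrent graph sharing game in which G is a tree, the first player can guarantee to take vertices of total weight at least 1/2; that is, v(G,w) ≥ 1/2. -/

import Mathlib

/-!
Formalization of the concurrent graph sharing game.

An instance is a finite connected simple graph `G` on a finite vertex type `V`
together with vertex weights `w : V → (0,1]` summing to `1`, such that no two
distinct subsets of vertices have the same total weight.

A game history is recorded as a list of the taken vertices, **most recent
first**.  The player-to-move at a history is determined by the history itself:
the first player (1st) moves when his collected weight so far is at most that
of the second player (2nd); by the distinct-subset-sums assumption a tie occurs
only at the empty history, where indeed 1st begins.  `scores w h` computes the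
pair `(w(F), w(S))` of total weights collected by 1st and 2nd along a history.

A strategy is a function from histories to the chosen next vertex; it is legal
if, whenever some legal move exists (a non-taken vertex that is adjacent to a
taken one, or any vertex at the very beginning), it produces a legal move.
`firstScore w σ τ` is the total weight collected by 1st after the complete play
(all `Fintype.card V` vertices taken) in which 1st uses `σ` and 2nd uses `τ`.

`FirstGuarantees G w c` says that 1st has a legal strategy guaranteeing that he
collects total weight at least `c` against every legal strategy of 2nd, and the
value `gameValue G w` is the supremum of all such guarantees `c`.
-/

namespace ConcurrentSharing

variable {V : Type} [Fintype V]

/-- The pair `(w(F), w(S))` of weights collected by the two players along a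
history (most recent vertex first): each vertex is assigned to the player who
was to move, namely 1st iff his score so far is at most 2nd's score. -/
noncomputable def scores (w : V → ℝ) : List V → ℝ × ℝ
  | [] => (0, 0)
  | v :: h =>
    let p := scores w h
    if p.1 ≤ p.2 then (p.1 + w v, p.2) else (p.1, p.2 + w v)

/-- `v` is a legal next move at history `h`: it is not yet taken, and it is
adjacent to some taken vertex (any vertex is legal at the start). -/
def LegalMove (G : SimpleGraph V) (h : List V) (v : V) : Prop :=
  v ∉ h ∧ (h = [] ∨ ∃ u ∈ h, G.Adj u v)

/-- A strategy (for either player) maps histories to vertices; it is legal if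
it produces a legal move whenever a legal move exists. -/
def LegalStrategy (G : SimpleGraph V) (σ : List V → V) : Prop :=
  ∀ h : List V, (∃ v, LegalMove G h v) → LegalMove G h (σ h)

/-- The history after `n` rounds when 1st plays `σ` and 2nd plays `τ`
(the player to move is the one whose collected weight so far is smaller;
at the start, i.e. on a tie, 1st moves). -/
noncomputable def playAux (w : V → ℝ) (σ τ : List V → V) : ℕ → List V
  | 0 => []
  | n + 1 =>
    let h := playAux w σ τ n
    (if (scores w h).1 ≤ (scores w h).2 then σ h else τ h) :: h

/-- The total weight `w(F)` collected by 1st at the end of the complete play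
(all vertices taken) in which 1st plays `σ` and 2nd plays `τ`. -/
noncomputable def firstScore (w : V → ℝ) (σ τ : List V → V) : ℝ :=
  (scores w (playAux w σ τ (Fintype.card V))).1

/-- 1st has a legal strategy collecting total weight at least `c` against
every legal strategy of 2nd. -/
def FirstGuarantees (G : SimpleGraph V) (w : V → ℝ) (c : ℝ) : Prop :=
  ∃ σ : List V → V, LegalStrategy G σ ∧
    ∀ τ : List V → V, LegalStrategy G τ → c ≤ firstScore w σ τ

/-- The value `v(G,w)`: the maximum total weight 1st can guarantee. -/
noncomputable def gameValue (G : SimpleGraph V) (w : V → ℝ) : ℝ :=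
  sSup {c : ℝ | FirstGuarantees G w c}

/-- `(G, w)` is an instance of the concurrent graph sharing game: `G` is
connected, the weights lie in `(0,1]` and sum to `1`, and no two distinct
subsets of vertices have the same total weight. -/
def IsGameInstance (G : SimpleGraph V) (w : V → ℝ) : Prop :=
  G.Connected ∧ (∀ v : V, 0 < w v ∧ w v ≤ 1) ∧ (∑ v : V, w v) = 1 ∧
    ∀ A B : Finset V, A ≠ B → ∑ a ∈ A, w a ≠ ∑ b ∈ B, w b

end ConcurrentSharing

/-!
From a position in which at least one vertex is taken the scores differ, so the position is
symmetric in the two players: if the owner of the vertex set `A` cannot secure half of the total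
weight against the owner of `B`, then he could after exchanging `A` and `B`.

Suppose 1st cannot secure one half on a tree. Then every opening `r` is refuted by a reply `f r`
adjacent to `r`. A tree has fewer edges than vertices, so two openings share their edge, that is,
`f (f u) = u` for some `u`. Now `u` answered by `f u` and `f u` answered by `u` both lose for 1st,
although these positions differ only by an exchange of the players.
-/

theorem exists_apply_apply_eq_self_of_card_edgeFinset_lt {V : Type*} [Fintype V]
    {G : SimpleGraph V} [Fintype G.edgeSet] (hG : G.edgeFinset.card < Fintype.card V)
    {f : V → V} (hf : ∀ v, G.Adj v (f v)) : ∃ u, f (f u) = u := by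
  obtain ⟨x, -, y, -, hxy, hedge⟩ := Finset.exists_ne_map_eq_of_card_lt_of_maps_to
    (s := Finset.univ) (t := G.edgeFinset) (f := fun v => s(v, f v))
    (by rwa [Finset.card_univ]) (fun v _ => by simpa using hf v)
  rcases Sym2.eq_iff.1 hedge with ⟨hx, -⟩ | ⟨hx, hfx⟩
  · exact absurd hx hxy
  · exact ⟨x, by rw [hfx, ← hx]⟩

namespace ConcurrentSharing

variable {V : Type} {G : SimpleGraph V} {w : V → ℝ} {c : ℝ} {n : ℕ} {h h' : List V} {v : V}

section Moves

theorem LegalMove.nodup_cons (hv : LegalMove G h v) (hnd : h.Nodup) : (v :: h).Nodup :=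
  List.nodup_cons.2 ⟨hv.1, hnd⟩

theorem legalMove_congr (hp : h.Perm h') : LegalMove G h v ↔ LegalMove G h' v := by
  simp only [LegalMove, hp.mem_iff, ← List.isEmpty_iff, hp.isEmpty_eq]

theorem legalMove_singleton {r s : V} : LegalMove G [r] s ↔ G.Adj r s := by
  simpa [LegalMove] using fun hadj : G.Adj r s => hadj.ne'

theorem exists_legalMove_of_notMem (hG : G.Preconnected) {x : V} (hx : x ∉ h) :
    ∃ v, LegalMove G h v := by
  rcases eq_or_ne h [] with hnil | hne
  · exact ⟨x, hx, Or.inl hnil⟩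
  · obtain ⟨y, hy⟩ := List.exists_mem_of_ne_nil h hne
    obtain ⟨p⟩ := hG y x
    obtain ⟨d, -, hfst, hsnd⟩ := p.exists_boundary_dart {z | z ∈ h} hy hx
    exact ⟨d.snd, hsnd, Or.inr ⟨d.fst, hfst, d.adj⟩⟩

theorem exists_legalMove_of_length_lt [Fintype V] (hG : G.Preconnected)
    (hlen : h.length < Fintype.card V) : ∃ v, LegalMove G h v := by
  classical
  obtain ⟨x, -, hx⟩ := Finset.exists_mem_notMem_of_card_lt_card
    (s := h.toFinset) (t := Finset.univ) (h.toFinset_card_le.trans_lt hlen)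
  exact exists_legalMove_of_notMem hG (by simpa using hx)

end Moves

section Scores

theorem scores_cons_of_le (hle : (scores w h).1 ≤ (scores w h).2) :
    scores w (v :: h) = ((scores w h).1 + w v, (scores w h).2) := by
  simp only [scores, if_pos hle]

theorem scores_cons_of_lt (hlt : (scores w h).2 < (scores w h).1) :
    scores w (v :: h) = ((scores w h).1, (scores w h).2 + w v) := by
  simp only [scores, if_neg hlt.not_ge]

theorem scores_singleton (w : V → ℝ) (r : V) : scores w [r] = (w r, 0) := by
  simp [scores]

theorem scores_pair {r : V} (hr : 0 < w r) (s : V) : scores w [s, r] = (w r, w s) := by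
  rw [scores_cons_of_lt] <;> simp [scores_singleton, hr]

theorem exists_scores_eq_sum [DecidableEq V] (w : V → ℝ) (hnd : h.Nodup) :
    ∃ A B : Finset V, Disjoint A B ∧ A ∪ B = h.toFinset ∧
      scores w h = (∑ a ∈ A, w a, ∑ b ∈ B, w b) := by
  induction h with
  | nil => exact ⟨∅, ∅, by simp [scores]⟩
  | cons v h ih =>
    obtain ⟨hv, hnd⟩ := List.nodup_cons.1 hnd
    obtain ⟨A, B, hdisj, hunion, hscores⟩ := ih hnd
    obtain ⟨hvA, hvB⟩ : v ∉ A ∧ v ∉ B := by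
      rwa [← List.mem_toFinset, ← hunion, Finset.mem_union, not_or] at hv
    rcases le_or_gt (scores w h).1 (scores w h).2 with hle | hlt
    · refine ⟨insert v A, B, Finset.disjoint_insert_left.2 ⟨hvB, hdisj⟩, ?_, ?_⟩
      · rw [Finset.insert_union, hunion, List.toFinset_cons]
      · rw [scores_cons_of_le hle, hscores, Finset.sum_insert hvA, add_comm]
    · refine ⟨A, insert v B, Finset.disjoint_insert_right.2 ⟨hvA, hdisj⟩, ?_, ?_⟩
      · rw [Finset.union_insert, hunion, List.toFinset_cons]
      · rw [scores_cons_of_lt hlt, hscores, Finset.sum_insert hvB, add_comm (w v)]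

theorem scores_fst_ne_snd (hw : Function.Injective fun A : Finset V => ∑ a ∈ A, w a)
    (hnd : h.Nodup) (hne : h ≠ []) : (scores w h).1 ≠ (scores w h).2 := by
  classical
  obtain ⟨A, B, hdisj, hunion, hscores⟩ := exists_scores_eq_sum w hnd
  intro htie
  obtain rfl : A = B := hw (by simpa [hscores] using htie)
  obtain rfl : A = ∅ := by simpa using hdisj
  exact hne (List.toFinset_eq_empty_iff h |>.1 (by simpa using hunion.symm))

theorem scores_fst_add_snd_of_length_eq_card [Fintype V] (w : V → ℝ) (hnd : h.Nodup)
    (hlen : h.length = Fintype.card V) : (scores w h).1 + (scores w h).2 = ∑ v, w v := by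
  classical
  obtain ⟨A, B, hdisj, hunion, hscores⟩ := exists_scores_eq_sum w hnd
  have huniv : h.toFinset = Finset.univ :=
    (Finset.card_eq_iff_eq_univ _).1 (by rw [List.toFinset_card_of_nodup hnd, hlen])
  rw [hscores, ← Finset.sum_union hdisj, hunion, huniv]

end Scores

section Forcing

/-- With `n` rounds left after the history `h`, 1st can force his final score to be at least `c`.
This is the backward induction of the game; a round without legal moves counts as won by the
player who is not to move. -/
def FirstCanForce (G : SimpleGraph V) (w : V → ℝ) (c : ℝ) : ℕ → List V → Prop
  | 0, h => c ≤ (scores w h).1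
  | n + 1, h =>
    if (scores w h).1 ≤ (scores w h).2 then
      ∃ v, LegalMove G h v ∧ FirstCanForce G w c n (v :: h)
    else ∀ v, LegalMove G h v → FirstCanForce G w c n (v :: h)

theorem firstCanForce_succ_of_le (hle : (scores w h).1 ≤ (scores w h).2) :
    FirstCanForce G w c (n + 1) h ↔ ∃ v, LegalMove G h v ∧ FirstCanForce G w c n (v :: h) := by
  simp only [FirstCanForce, if_pos hle]

theorem firstCanForce_succ_of_lt (hlt : (scores w h).2 < (scores w h).1) :
    FirstCanForce G w c (n + 1) h ↔ ∀ v, LegalMove G h v → FirstCanForce G w c n (v :: h) := by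
  simp only [FirstCanForce, if_neg hlt.not_ge]

theorem firstCanForce_succ_nil :
    FirstCanForce G w c (n + 1) [] ↔ ∃ r, FirstCanForce G w c n [r] := by
  rw [firstCanForce_succ_of_le (by simp [scores])]
  simp [LegalMove]

theorem firstCanForce_succ_singleton {r : V} (hr : 0 < w r) :
    FirstCanForce G w c (n + 1) [r] ↔ ∀ s, G.Adj r s → FirstCanForce G w c n [s, r] := by
  rw [firstCanForce_succ_of_lt (by simpa [scores_singleton] using hr)]
  simp only [legalMove_singleton]

end Forcing

section Mirror

/-- The histories `h` and `h'` have taken the same vertices and lead to the same scores, but with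
the players exchanged. The order of the moves is irrelevant. -/
structure IsMirror (w : V → ℝ) (h h' : List V) : Prop where
  perm : h.Perm h'
  scores_eq : scores w h' = (scores w h).swap

theorem IsMirror.symm (hm : IsMirror w h h') : IsMirror w h' h :=
  ⟨hm.perm.symm, by rw [hm.scores_eq, Prod.swap_swap]⟩

theorem IsMirror.scores_lt_iff (hm : IsMirror w h h') :
    (scores w h').2 < (scores w h').1 ↔ (scores w h).1 < (scores w h).2 := by
  rw [hm.scores_eq, Prod.fst_swap, Prod.snd_swap]

theorem isMirror_pair {r s : V} (hr : 0 < w r) (hs : 0 < w s) : IsMirror w [s, r] [r, s] :=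
  ⟨List.Perm.swap r s [], by rw [scores_pair hr, scores_pair hs, Prod.swap_prod_mk]⟩

theorem IsMirror.cons_of_lt (hm : IsMirror w h h') (hlt : (scores w h).1 < (scores w h).2) (v : V) :
    IsMirror w (v :: h) (v :: h') where
  perm := hm.perm.cons v
  scores_eq := by
    rw [scores_cons_of_le hlt.le, scores_cons_of_lt (hm.scores_lt_iff.2 hlt), hm.scores_eq]
    rfl

theorem IsMirror.firstCanForce_or_firstCanForce [Fintype V]
    (hw : Function.Injective fun A : Finset V => ∑ a ∈ A, w a)
    {c c' : ℝ} (hc : c + c' ≤ ∑ v, w v) (hm : IsMirror w h h') (hnd : h.Nodup) (hne : h ≠ [])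
    (hlen : h.length + n = Fintype.card V) :
    FirstCanForce G w c n h ∨ FirstCanForce G w c' n h' := by
  induction n generalizing h h' c c' with
  | zero =>
    have htotal := scores_fst_add_snd_of_length_eq_card w hnd hlen
    simp only [FirstCanForce, hm.scores_eq, Prod.fst_swap]
    by_contra! hlt
    linarith
  | succ n ih =>
    wlog hlt : (scores w h).1 < (scores w h).2 generalizing h h' c c'
    · have hlt' : (scores w h').1 < (scores w h').2 := hm.symm.scores_lt_iff.1
        ((scores_fst_ne_snd hw hnd hne).lt_or_gt.resolve_left hlt)
      exact (this (by rwa [add_comm]) hm.symm (hm.perm.nodup_iff.1 hnd)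
        (fun hnil => hne (hnil ▸ hm.perm).eq_nil) (by rwa [← hm.perm.length_eq]) hlt').symm
    rw [firstCanForce_succ_of_le hlt.le, firstCanForce_succ_of_lt (hm.scores_lt_iff.2 hlt)]
    refine or_iff_not_imp_left.2 fun hno v hv' => ?_
    have hv : LegalMove G h v := (legalMove_congr hm.perm).2 hv'
    exact (ih hc (hm.cons_of_lt hlt v) (hv.nodup_cons hnd) (List.cons_ne_nil v h)
      (by rw [List.length_cons]; omega)).resolve_left fun hforce => hno ⟨v, hv, hforce⟩

theorem firstCanForce_pair_or_firstCanForce_pair_swap [Fintype V] (hpos : ∀ v, 0 < w v)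
    (hw : Function.Injective fun A : Finset V => ∑ a ∈ A, w a)
    {c c' : ℝ} (hc : c + c' ≤ ∑ v, w v) {r s : V} (hrs : r ≠ s) (hn : n + 2 = Fintype.card V) :
    FirstCanForce G w c n [s, r] ∨ FirstCanForce G w c' n [r, s] :=
  (isMirror_pair (hpos r) (hpos s)).firstCanForce_or_firstCanForce hw hc (by simpa using hrs.symm)
    (List.cons_ne_nil s [r]) (by simpa [add_comm] using hn)

end Mirror

theorem firstCanForce_half_sum [Fintype V] [Fintype G.edgeSet] (hpos : ∀ v, 0 < w v)
    (hw : Function.Injective fun A : Finset V => ∑ a ∈ A, w a)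
    (hG : G.edgeFinset.card < Fintype.card V) :
    FirstCanForce G w ((∑ v, w v) / 2) (Fintype.card V) [] := by
  match hcard : Fintype.card V with
  | 0 => omega
  | 1 =>
    obtain ⟨r, hr⟩ := Fintype.card_eq_one_iff.1 hcard
    have htotal : ∑ v, w v = w r := Fintype.sum_eq_single r fun v hv => absurd (hr v) hv
    refine firstCanForce_succ_nil.2 ⟨r, ?_⟩
    simpa only [FirstCanForce, scores_singleton, htotal] using half_le_self (hpos r).le
  | n + 2 =>
    rw [firstCanForce_succ_nil]
    by_contra! hlose
    have hrefute : ∀ r, ∃ s, G.Adj r s ∧ ¬ FirstCanForce G w ((∑ v, w v) / 2) n [s, r] := by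
      simpa only [firstCanForce_succ_singleton (hpos _), not_forall, exists_prop] using hlose
    choose f hadj hf using hrefute
    obtain ⟨u, hu⟩ := exists_apply_apply_eq_self_of_card_edgeFinset_lt hG hadj
    have hfu := hf (f u)
    rw [hu] at hfu
    exact (firstCanForce_pair_or_firstCanForce_pair_swap hpos hw (add_halves _).le (hadj u).ne
      hcard.symm).elim (hf u) hfu

section Strategies

theorem exists_legalStrategy_forall_legalMove [Nonempty V] (G : SimpleGraph V)
    (P : List V → Prop) :
    ∃ σ, LegalStrategy G σ ∧ ∀ h v, LegalMove G h v → P (v :: h) → P (σ h :: h) := by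
  have hchoice : ∀ h, ∃ x, ((∃ v, LegalMove G h v) → LegalMove G h x) ∧
      ∀ v, LegalMove G h v → P (v :: h) → P (x :: h) := by
    intro h
    by_cases hgood : ∃ v, LegalMove G h v ∧ P (v :: h)
    · obtain ⟨x, hx, hPx⟩ := hgood
      exact ⟨x, fun _ => hx, fun _ _ _ => hPx⟩
    · exact ⟨Classical.epsilon (LegalMove G h), Classical.epsilon_spec,
        fun v hv hPv => absurd ⟨v, hv, hPv⟩ hgood⟩
  choose σ hσ hP using hchoice
  exact ⟨σ, hσ, hP⟩

theorem length_playAux (w : V → ℝ) (σ τ : List V → V) (n : ℕ) :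
    (playAux w σ τ n).length = n := by
  induction n with
  | zero => rfl
  | succ n ih => rw [playAux, List.length_cons, ih]

variable [Fintype V]

theorem firstGuarantees_of_firstCanForce (hG : G.Connected)
    (hforce : FirstCanForce G w c (Fintype.card V) []) : FirstGuarantees G w c := by
  have := hG.nonempty
  obtain ⟨σ, hσ, hkeep⟩ := exists_legalStrategy_forall_legalMove G
    fun h => FirstCanForce G w c (Fintype.card V - h.length) h
  refine ⟨σ, hσ, fun τ hτ => ?_⟩
  suffices hinv : ∀ n ≤ Fintype.card V,
      FirstCanForce G w c (Fintype.card V - n) (playAux w σ τ n) by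
    simpa only [Nat.sub_self, FirstCanForce, firstScore] using hinv _ le_rfl
  intro n hn
  induction n with
  | zero => exact hforce
  | succ n ih =>
    have hlen := length_playAux w σ τ n
    have hrounds : Fintype.card V - n = Fintype.card V - (n + 1) + 1 := by omega
    have hnow := ih (by omega)
    rw [hrounds] at hnow
    rw [playAux]
    split_ifs with hle
    · obtain ⟨v, hv, hforce_v⟩ := (firstCanForce_succ_of_le hle).1 hnow
      simpa only [List.length_cons, hlen] using
        hkeep _ v hv (by simpa only [List.length_cons, hlen] using hforce_v)
    · exact (firstCanForce_succ_of_lt (not_le.1 hle)).1 hnow _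
        (hτ _ (exists_legalMove_of_length_lt hG.preconnected (by omega)))

theorem firstGuarantees_half_sum_of_isTree (hpos : ∀ v, 0 < w v)
    (hw : Function.Injective fun A : Finset V => ∑ a ∈ A, w a) (hG : G.IsTree) :
    FirstGuarantees G w ((∑ v, w v) / 2) := by
  classical
  exact firstGuarantees_of_firstCanForce hG.connected
    (firstCanForce_half_sum hpos hw (Nat.lt_of_succ_le hG.card_edgeFinset.le))

theorem bddAbove_setOf_firstGuarantees (G : SimpleGraph V) (w : V → ℝ) :
    BddAbove {c | FirstGuarantees G w c} := by
  obtain ⟨b, hb⟩ := ((List.finite_length_eq V (Fintype.card V)).image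
    fun h => (scores w h).1).bddAbove
  exact ⟨b, fun c ⟨σ, hσ, hc⟩ =>
    (hc σ hσ).trans (hb ⟨_, length_playAux w σ σ (Fintype.card V), rfl⟩)⟩

theorem FirstGuarantees.le_gameValue (hc : FirstGuarantees G w c) : c ≤ gameValue G w :=
  le_csSup (bddAbove_setOf_firstGuarantees G w) hc

end Strategies

end ConcurrentSharing

open ConcurrentSharing in
/-- For every instance `(G,w)` of the concurrent graph
sharing game in which `G` is a tree, the first player can guarantee to take
vertices of total weight at least `1/2`; that is, `v(G,w) ≥ 1/2`. -/
theorem tree_first_player_guarantees_one_half {V : Type} [Fintype V]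
    (G : SimpleGraph V) (w : V → ℝ) (hGw : IsGameInstance G w)
    (htree : G.IsTree) :
    FirstGuarantees G w (1 / 2) ∧ 1 / 2 ≤ gameValue G w := by
  obtain ⟨-, hw01, htotal, hsums⟩ := hGw
  have hinj : Function.Injective fun A : Finset V => ∑ a ∈ A, w a :=
    fun A B hAB => by_contra fun hne => hsums A B hne hAB
  have hhalf : FirstGuarantees G w (1 / 2) :=
    htotal ▸ firstGuarantees_half_sum_of_isTree (fun v => (hw01 v).1) hinj htree
  exact ⟨hhalf, hhalf.le_gameValue⟩
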